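/- In Thompson's group F, presented on two generators x₀, x₁ with the two relators [x₀x₁⁻¹, x₀⁻¹x₁x₀] and [x₀x₁⁻¹, x₀⁻²x₁x₀²], the element x₀x₁⁻¹ commutes with x₀⁻ⁱx₁x₀ⁱ for every integer i ≥ 1; that is, the relations [x₀x₁⁻¹, x₀⁻ⁱx₁x₀ⁱ] = 1 for i = 1, 2 imply the analogous relation for every i ≥ 1. -/

import Mathlib

/-!
The element `x * y⁻¹` commutes with `z` exactly when `x` and `y` conjugate `z` to the same element.
Let `φ` be conjugation `z ↦ x⁻¹ * z * x`. That `x * y⁻¹` commutes with `φ y` then reads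
`φ² y = y⁻¹ * φ y * y`, and applying `φⁿ` turns this into a recurrence that expresses `φⁿ⁺² y`
through `φⁿ y` and `φⁿ⁺¹ y`. Anything commuting with two consecutive terms of the sequence
therefore commutes with all later ones.
-/

/-- The commutator `[a, b] = a⁻¹ b⁻¹ a b`. -/
def commWord {G : Type*} [Group G] (a b : G) : G := a⁻¹ * b⁻¹ * a * b

/-- The two defining relators of Thompson's group `F`:
`[x₀x₁⁻¹, x₀⁻ⁱx₁x₀ⁱ]` for `i = 1, 2`. -/
def thompsonRels : Set (FreeGroup (Fin 2)) :=
  {r | ∃ i ∈ ({1, 2} : Set ℕ),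
    r = commWord (FreeGroup.of 0 * (FreeGroup.of 1)⁻¹)
        ((FreeGroup.of 0)⁻¹ ^ i * FreeGroup.of 1 * FreeGroup.of 0 ^ i)}

/-- Thompson's group `F`. -/
abbrev ThompsonF : Type := PresentedGroup thompsonRels

/-- The standard generator `x₀` of Thompson's group `F`. -/
def tx0 : ThompsonF := PresentedGroup.of 0

/-- The standard generator `x₁` of Thompson's group `F`. -/
def tx1 : ThompsonF := PresentedGroup.of 1

section Group

variable {G : Type*} [Group G]

theorem commWord_eq_one_iff_commute {a b : G} : commWord a b = 1 ↔ Commute a b := by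
  rw [← Commute.inv_inv_iff, ← commutatorElement_eq_one_iff_commute, commutatorElement_def,
    inv_inv, inv_inv, commWord]

theorem commute_mul_inv_iff_conj_eq {x y z : G} :
    Commute (x * y⁻¹) z ↔ x⁻¹ * z * x = y⁻¹ * z * y := by
  rw [commute_iff_eq, mul_assoc, ← eq_inv_mul_iff_mul_eq, eq_comm, ← mul_assoc, ← mul_assoc,
    ← div_eq_mul_inv, div_eq_iff_eq_mul]

theorem iterate_add_two_eq_conj {φ : G →* G} {y : G} (h : φ (φ y) = y⁻¹ * φ y * y) (n : ℕ) :
    φ^[n + 2] y = (φ^[n] y)⁻¹ * φ^[n + 1] y * φ^[n] y :=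
  calc φ^[n + 2] y = φ^[n] (φ (φ y)) := rfl
    _ = φ^[n] (y⁻¹ * φ y * y) := by rw [h]
    _ = (φ^[n] y)⁻¹ * φ^[n + 1] y * φ^[n] y := by
      rw [iterate_map_mul, iterate_map_mul, iterate_map_inv, Function.iterate_succ_apply]

theorem commute_of_conj_recurrence {a : G} {u : ℕ → G}
    (hu : ∀ n, u (n + 2) = (u n)⁻¹ * u (n + 1) * u n)
    (h₀ : Commute a (u 0)) (h₁ : Commute a (u 1)) (n : ℕ) : Commute a (u n) := by
  induction n using Nat.twoStepInduction with
  | zero => exact h₀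
  | one => exact h₁
  | more n ih ih' =>
    rw [hu]
    exact (ih.inv_right.mul_right ih').mul_right ih

theorem iterate_conj_inv_apply (x y : G) (n : ℕ) :
    (MulAut.conj x⁻¹).toMonoidHom^[n] y = x⁻¹ ^ n * y * x ^ n := by
  induction n with
  | zero => simp
  | succ n ih =>
    rw [Function.iterate_succ_apply', ih, pow_succ' x⁻¹, pow_succ x]
    simp [mul_assoc]

theorem stmt8_general {x y : G}
    (h : ∀ i ∈ ({1, 2} : Set ℕ), commWord (x * y⁻¹) (x⁻¹ ^ i * y * x ^ i) = 1)
    (i : ℕ) (hi : 1 ≤ i) : commWord (x * y⁻¹) (x⁻¹ ^ i * y * x ^ i) = 1 := by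
  let φ : G →* G := (MulAut.conj x⁻¹).toMonoidHom
  simp only [commWord_eq_one_iff_commute, ← iterate_conj_inv_apply] at h ⊢
  have h₁ : Commute (x * y⁻¹) (φ y) := h 1 (by simp)
  have h₂ : Commute (x * y⁻¹) (φ (φ y)) := h 2 (by simp)
  have hφ : φ (φ y) = y⁻¹ * φ y * y := by
    rw [← commute_mul_inv_iff_conj_eq.mp h₁]
    simp [φ]
  obtain ⟨n, rfl⟩ := Nat.exists_eq_add_of_le' hi
  exact commute_of_conj_recurrence (u := fun n ↦ φ^[n + 1] y)
    (fun n ↦ iterate_add_two_eq_conj hφ (n + 1)) h₁ h₂ n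

end Group

theorem commWord_thompsonF_eq_one {i : ℕ} (hi : i ∈ ({1, 2} : Set ℕ)) :
    commWord (tx0 * tx1⁻¹) (tx0⁻¹ ^ i * tx1 * tx0 ^ i) = 1 :=
  PresentedGroup.one_of_mem (rels := thompsonRels) ⟨i, hi, rfl⟩

/-- In Thompson's group `F`, the relations `[x₀x₁⁻¹, x₀⁻ⁱx₁x₀ⁱ] = 1` for `i = 1, 2` imply
the analogous relation for every `i ≥ 1`: the element `x₀x₁⁻¹` commutes with `x₀⁻ⁱx₁x₀ⁱ`. -/
theorem stmt8 (i : ℕ) (hi : 1 ≤ i) :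
    commWord (tx0 * tx1⁻¹) (tx0⁻¹ ^ i * tx1 * tx0 ^ i) = 1 :=
  stmt8_general (fun _ ↦ commWord_thompsonF_eq_one) i hi
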